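/- Let A = (a_{i,j}) be a symmetric positive-definite checkerboard matrix of size 2n+1 (n ≄ 1) satisfying a_{i,j} = (-1)^{(i-j)/2} a_{(i+j)/2,(i+j)/2} whenever i + j is even. Then the entry b_{1,2n+1} of A^{-1} is positive. -/

import Mathlib

open Matrix in
theorem skew_det_nonneg {m : ℕ} (M : Matrix (Fin m) (Fin m) ℝ) (hM : ∀ i j, M i j = - M j i) :
    0 ≤ M.det := by
  by_contra hneg
  push Not at hneg
  let f : ℝ → ℝ := fun s => ((1 - s) • (1 : Matrix (Fin m) (Fin m) ℝ) + s • M).det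
  have hf : Continuous f := by
    apply Continuous.matrix_det
    fun_prop
  have h0 : f 0 = 1 := by simp [f]
  have h1 : f 1 = M.det := by simp [f]
  have hmem : (0 : ℝ) ∈ Set.Icc (f 1) (f 0) := by
    rw [h0, h1]
    exact ⟨hneg.le, zero_le_one⟩
  obtain ⟨s, hs, hfs⟩ := intermediate_value_Icc' (zero_le_one' ℝ) hf.continuousOn hmem
  have hs1 : s ≠ 1 := by
    rintro rfl
    rw [h1] at hfs
    linarith
  have hs2 : 0 < 1 - s := by
    have := lt_of_le_of_ne hs.2 hs1
    linarith
  obtain ⟨v, hv, hv0⟩ := Matrix.exists_mulVec_eq_zero_iff.mpr hfs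
  have hMT : Mᵀ = -M := by
    ext i j
    simp [hM j i]
  have hq : v ⬝ᵥ (M *ᵥ v) = 0 := by
    have h2 : v ⬝ᵥ (M *ᵥ v) = - (v ⬝ᵥ (M *ᵥ v)) := by
      conv_lhs => rw [Matrix.dotProduct_mulVec, ← Matrix.mulVec_transpose, hMT, dotProduct_comm,
        Matrix.neg_mulVec, dotProduct_neg]
    linarith
  have h3 : v ⬝ᵥ (((1 - s) • (1 : Matrix (Fin m) (Fin m) ℝ) + s • M) *ᵥ v) = 0 := by
    rw [hv0, dotProduct_zero]
  rw [Matrix.add_mulVec, Matrix.smul_mulVec, Matrix.smul_mulVec, Matrix.one_mulVec,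
    dotProduct_add, dotProduct_smul, dotProduct_smul, hq] at h3
  simp only [smul_eq_mul, mul_zero, add_zero, mul_eq_zero] at h3
  rcases h3 with h3 | h3
  · linarith
  · exact hv (dotProduct_self_eq_zero.mp h3)

open Matrix in
theorem inv_corner_entry_pos (n : ℕ) (hn : 1 ≤ n)
    (A : Matrix (Fin (2*n+1)) (Fin (2*n+1)) ℝ)
    (hpd : A.PosDef)
    (hcheck : ∀ i j : Fin (2*n+1), Odd ((i : ℕ) + (j : ℕ)) → A i j = 0)
    (hstruct : ∀ i j : Fin (2*n+1), Even ((i : ℕ) + (j : ℕ)) →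
      A i j = (-1 : ℝ) ^ ((((i : ℕ) : ℤ) - ((j : ℕ) : ℤ)) / 2) *
        A ⟨((i : ℕ) + (j : ℕ)) / 2, by have := i.isLt; have := j.isLt; omega⟩
          ⟨((i : ℕ) + (j : ℕ)) / 2, by have := i.isLt; have := j.isLt; omega⟩) :
    0 < A⁻¹ (0 : Fin (2*n+1)) (Fin.last (2*n)):= by
  have hdet := hpd.det_pos
  let M : Matrix (Fin (2*n)) (Fin (2*n)) ℝ := fun i j => A i.succ j.castSucc
  have hM : ∀ i j, M i j = - M j i := by
    intro i j
    simp only [M]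
    rcases Nat.even_or_odd ((i : ℕ) + 1 + j) with h | h
    · rw [hstruct i.succ j.castSucc (by simpa using h),
        hstruct j.succ i.castSucc (by simpa [add_comm, add_left_comm, add_assoc] using h)]
      have e : (((i.succ : Fin (2*n+1)) : ℕ) + (j.castSucc : ℕ)) / 2
          = (((j.succ : Fin (2*n+1)) : ℕ) + (i.castSucc : ℕ)) / 2 := by
        simp only [Fin.val_succ, Fin.val_castSucc]
        congr 1
        omega
      simp only [e]
      rw [← neg_mul]
      congr 1
      obtain ⟨k, hk⟩ := h
      have e1 : ((((i.succ : Fin (2*n+1)) : ℕ) : ℤ) - ((j.castSucc : ℕ) : ℤ)) / 2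
          = (k : ℤ) - j := by
        simp only [Fin.val_succ, Fin.val_castSucc]
        omega
      have e2 : ((((j.succ : Fin (2*n+1)) : ℕ) : ℤ) - ((i.castSucc : ℕ) : ℤ)) / 2
          = -((k : ℤ) - j) + 1 := by
        simp only [Fin.val_succ, Fin.val_castSucc]
        omega
      rw [e1, e2, zpow_add₀ (by norm_num), _root_.zpow_neg, ← _root_.inv_zpow]
      norm_num
    · rw [hcheck i.succ j.castSucc (by simpa using h),
        hcheck j.succ i.castSucc (by simpa [add_comm, add_left_comm, add_assoc] using h)]
      simp
  have hM0 : ∀ i j : Fin (2*n), Even ((i : ℕ) + j) → M i j = 0 := by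
    intro i j h
    apply hcheck
    simp only [Fin.val_succ, Fin.val_castSucc]
    grind
  have hne : M.det ≠ 0 := by
    intro h0
    obtain ⟨x, hx, hx0⟩ := Matrix.exists_mulVec_eq_zero_iff.mpr h0
    have hrow : ∀ i, ∑ j, M i j * x j = 0 := fun i => congrFun hx0 i
    apply hx
    have hodd : ∀ j : Fin (2*n), Odd (j : ℕ) → x j = 0 := by
      let z : Fin (2*n+1) → ℝ := Fin.snoc (α := fun _ => ℝ)
        (fun j : Fin (2*n) => if Odd (j : ℕ) then x j else 0) 0
      have hz : A *ᵥ z = 0 := by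
        funext i
        simp only [Matrix.mulVec, dotProduct, Fin.sum_univ_castSucc, z, Fin.snoc_castSucc,
          Fin.snoc_last, mul_zero, add_zero, Pi.zero_apply]
        rcases Nat.even_or_odd (i : ℕ) with hi | hi
        · apply Finset.sum_eq_zero
          intro j _
          split_ifs with hj
          · rw [hcheck i j.castSucc (by simpa using hi.add_odd hj), zero_mul]
          · simp
        · obtain ⟨k, rfl⟩ := Fin.exists_succ_eq.mpr (show i ≠ 0 by rintro rfl; simp at hi)
          refine Eq.trans ?_ (hrow k)
          apply Finset.sum_congr rfl
          intro j _
          split_ifs with hj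
          · rfl
          · rw [hM0 k j (by simp only [Fin.val_succ] at hi; grind)]
            simp
      have hz0 := Matrix.eq_zero_of_mulVec_eq_zero hdet.ne' hz
      intro j hj
      have := congrFun hz0 j.castSucc
      simpa [z, hj] using this
    have heven : ∀ j : Fin (2*n), Even (j : ℕ) → x j = 0 := by
      let w : Fin (2*n+1) → ℝ := Fin.cons (α := fun _ => ℝ) 0
        (fun j : Fin (2*n) => if Even (j : ℕ) then x j else 0)
      have hw : w ᵥ* A = 0 := by
        funext j
        simp only [Matrix.vecMul, dotProduct, Fin.sum_univ_succ, w, Fin.cons_zero,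
          Fin.cons_succ, zero_mul, zero_add, Pi.zero_apply]
        rcases Nat.even_or_odd (j : ℕ) with hj | hj
        · apply Finset.sum_eq_zero
          intro i _
          split_ifs with hi
          · rw [hcheck i.succ j (by simp only [Fin.val_succ]; grind), mul_zero]
          · simp
        · obtain ⟨k, rfl⟩ := Fin.exists_castSucc_eq.mpr
            (show j ≠ Fin.last _ by rintro rfl; simp at hj; grind)
          rw [← neg_eq_zero, ← Finset.sum_neg_distrib]
          refine Eq.trans ?_ (hrow k)
          apply Finset.sum_congr rfl
          intro i _
          split_ifs with hi
          · rw [hM k i]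
            simp only [M]
            ring
          · rw [hM0 k i (by simp only [Fin.val_castSucc] at hj; grind)]
            simp
      have hw0 := Matrix.eq_zero_of_vecMul_eq_zero hdet.ne' hw
      intro j hj
      have := congrFun hw0 j.succ
      simpa [w, hj] using this
    funext j
    rcases Nat.even_or_odd (j : ℕ) with h | h
    · exact heven j h
    · exact hodd j h
  have hpos : 0 < M.det := lt_of_le_of_ne (skew_det_nonneg M hM) hne.symm
  have hadj : A.adjugate 0 (Fin.last (2*n)) = M.det := by
    rw [Matrix.adjugate_fin_succ_eq_det_submatrix, ← Matrix.det_transpose M]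
    have hs : A.submatrix (Fin.last (2*n)).succAbove (0 : Fin (2*n+1)).succAbove = Mᵀ := by
      ext i j
      have := hpd.isHermitian.apply i.castSucc j.succ
      rw [Matrix.transpose_apply]
      simpa [M] using this.symm
    rw [hs]
    simp
  rw [Matrix.inv_def, Matrix.smul_apply, hadj, Ring.inverse_eq_inv', smul_eq_mul]
  positivity
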